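/- arXiv:q-alg/9505024 — 2 statements merged into one kernel-verified Lean document; each statement's English description precedes it below -/
import Mathlib

section
/- Let A be a finite-dimensional Hopf algebra over a field k, and let d₀ = Σ_t S²(a_t)x_t in the Drinfeld double D(A), where {a_t} is a basis of A with dual basis {x_t}. Then for every element u ∈ D(A), S²_{D(A)}(u) = d₀ u d₀⁻¹, where S_{D(A)} is the antipode of D(A), given on x ⊗ a by S_{D(A)}(x ⊗ a) = S(a)S⁻¹(x). -/
/-- A finite-dimensional Hopf algebra over a field `k`, presented by structure
constants with respect to a finite basis indexed by `ι`.  The underlying space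
of the Hopf algebra `A` is `ι → k` (with basis the delta functions `e i`), and
its dual Hopf algebra `A*` is also modelled on `ι → k` (using the dual basis).

* `mul s t r` is the coefficient of `e r` in `e s * e t`;
* `one` is the coefficient vector of the unit of `A`;
* `comul r s t` is the coefficient of `e s ⊗ e t` in `Δ (e r)`;
* `counit t` is `ε (e t)`;
* `S t r` is the coefficient of `e r` in the antipode `S (e t)`, and `Sinv` is
  the matrix of the (composition) inverse of the antipode.

The axioms express associativity, unitality, coassociativity, counitality,
that `Δ` and `ε` are algebra maps, the antipode identities, and that `Sinv`
is inverse to `S`. -/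
structure FinHopfSC (k : Type*) [Field k] (ι : Type*) [Fintype ι] [DecidableEq ι] where
  mul : ι → ι → ι → k
  one : ι → k
  comul : ι → ι → ι → k
  counit : ι → k
  S : ι → ι → k
  Sinv : ι → ι → k
  assoc : ∀ a b c r, (∑ s, mul a b s * mul s c r) = ∑ s, mul b c s * mul a s r
  one_mul : ∀ b r, (∑ s, one s * mul s b r) = if b = r then 1 else 0
  mul_one : ∀ a r, (∑ s, one s * mul a s r) = if a = r then 1 else 0
  coassoc : ∀ r a b c, (∑ s, comul r s c * comul s a b) = ∑ s, comul r a s * comul s b c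
  counit_comul : ∀ r t, (∑ s, comul r s t * counit s) = if r = t then 1 else 0
  comul_counit : ∀ r t, (∑ s, comul r t s * counit s) = if r = t then 1 else 0
  comul_mul : ∀ a b s t, (∑ r, mul a b r * comul r s t) =
      ∑ a1, ∑ a2, ∑ b1, ∑ b2, comul a a1 a2 * comul b b1 b2 * mul a1 b1 s * mul a2 b2 t
  counit_mul : ∀ a b, (∑ r, mul a b r * counit r) = counit a * counit b
  comul_one : ∀ s t, (∑ r, one r * comul r s t) = one s * one t
  counit_one : (∑ r, one r * counit r) = 1
  antipode_left : ∀ r t, (∑ a, ∑ b, ∑ s, comul r a b * S a s * mul s b t) = counit r * one t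
  antipode_right : ∀ r t, (∑ a, ∑ b, ∑ s, comul r a b * S b s * mul a s t) = counit r * one t
  S_Sinv : ∀ a r, (∑ s, S a s * Sinv s r) = if a = r then 1 else 0
  Sinv_S : ∀ a r, (∑ s, Sinv a s * S s r) = if a = r then 1 else 0

namespace FinHopfSC

variable {k : Type*} [Field k] {ι : Type*} [Fintype ι] [DecidableEq ι]
variable (H : FinHopfSC k ι)

/-- the `i`-th basis vector `a_i` of `A` (equally, the `i`-th dual basis vector
`x_i` of `A*`). -/
def e (i : ι) : ι → k := fun j => if i = j then 1 else 0

/-- the product of `A`. -/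
def mulA (a b : ι → k) : ι → k := fun r => ∑ s, ∑ t, a s * b t * H.mul s t r

/-- the unit of `A`. -/
def oneA : ι → k := H.one

/-- the (convolution) product of the dual Hopf algebra `A*`:
`⟨x y, a⟩ = ⟨x ⊗ y, Δ a⟩`. -/
def mulX (x y : ι → k) : ι → k := fun r => ∑ s, ∑ t, H.comul r s t * x s * y t

/-- the unit of `A*` (the counit of `A`). -/
def oneX : ι → k := H.counit

/-- the antipode of `A`. -/
def SA (a : ι → k) : ι → k := fun r => ∑ t, a t * H.S t r

/-- the inverse of the antipode of `A`. -/
def SAinv (a : ι → k) : ι → k := fun r => ∑ t, a t * H.Sinv t r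

/-- the antipode of `A*` (the transpose of the antipode of `A`). -/
def SX (x : ι → k) : ι → k := fun t => ∑ r, H.S t r * x r

/-- the inverse of the antipode of `A*`. -/
def SXinv (x : ι → k) : ι → k := fun t => ∑ r, H.Sinv t r * x r

/-- the left regular action `a ⇀ x = x₍₁₎ ⟨x₍₂₎, a⟩` of `A` on `A*`, i.e.
`⟨a ⇀ x, b⟩ = ⟨x, b a⟩`. -/
def hit (a x : ι → k) : ι → k := fun r => ∑ s, ∑ t, a s * H.mul r s t * x t

/-- the left adjoint action `ad_x y = x₍₂₎ y S⁻¹(x₍₁₎)` of `A*` (as the Hopf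
algebra `A*` with the opposite coproduct) on `A*`. -/
def adX (x y : ι → k) : ι → k := fun r =>
  ∑ p, ∑ a, ∑ b, H.mul a b p * x p * (H.mulX (e b) (H.mulX y (H.SXinv (e a)))) r

end FinHopfSC

namespace FinHopfSC

variable {k : Type*} [Field k] {ι : Type*} [Fintype ι] [DecidableEq ι]
variable (H : FinHopfSC k ι)

/-- the element `a_a ▷ x_d = (a_a)₍₁₎ ⇀ x_d ↼ S⁻¹((a_a)₍₂₎)` of `A*`
(the left coadjoint action of `A` on `A*`), written in coordinates. -/
def rtri (a d : ι) : ι → k := fun d' =>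
  ∑ m, ∑ n, ∑ u, ∑ w, H.comul a m n * H.mul u m d * H.Sinv n w * H.mul w d' u

/-- the element `a_b ◁ x_c = S⁻¹((x_c)₍₁₎) ⇀ a_b ↼ (x_c)₍₂₎` of `A`
(the right coadjoint action of `A*` on `A`), written in coordinates. -/
def ltri (b c : ι) : ι → k := fun p' =>
  ∑ g, ∑ h1, ∑ b2, ∑ q', H.mul g h1 c * H.comul b h1 b2 * H.comul b2 p' q' * H.Sinv q' g

end FinHopfSC

namespace FinHopfSC
section helpers
set_option linter.unusedSectionVars false
variable {k : Type*} [Field k] {ι : Type*} [Fintype ι] [DecidableEq ι]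
variable (H : FinHopfSC k ι)
variable {V : Type*} [AddCommGroup V] [Module k V]
variable {W : Type*} [AddCommGroup W] [Module k W]
variable {R : Type*} [Ring R] [Algebra k R]

/-- Sweedler sum over the coproduct. -/
def sw (q : ι) (F : ι → ι → V) : V := ∑ s, ∑ t, H.comul q s t • F s t

/-- `f (a b)`. -/
def mm (a b : ι) (f : ι → V) : V := ∑ r, H.mul a b r • f r

/-- `f (1)`. -/
def on (f : ι → V) : V := ∑ r, H.one r • f r

/-- `f ∘ M`. -/
def ap (M : ι → ι → k) (f : ι → V) (q : ι) : V := ∑ t, M q t • f t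

theorem sw_assoc (q : ι) (F : ι → ι → ι → V) :
    H.sw q (fun s c => H.sw s (fun a b => F a b c)) =
      H.sw q (fun a s => H.sw s (fun b c => F a b c)) := by
  have h1 : H.sw q (fun s c => H.sw s (fun a b => F a b c)) =
      ∑ a, ∑ b, ∑ c, (∑ s, H.comul q s c * H.comul s a b) • F a b c := by
    simp only [sw, Finset.smul_sum, Finset.sum_smul, smul_smul]
    rw [Finset.sum_comm]
    rw [Finset.sum_congr rfl (fun c _ => Finset.sum_comm)]
    rw [Finset.sum_comm]
    refine Finset.sum_congr rfl fun a _ => ?_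
    rw [Finset.sum_congr rfl (fun c _ => Finset.sum_comm)]
    rw [Finset.sum_comm]
  have h2 : H.sw q (fun a s => H.sw s (fun b c => F a b c)) =
      ∑ a, ∑ b, ∑ c, (∑ s, H.comul q a s * H.comul s b c) • F a b c := by
    simp only [sw, Finset.smul_sum, Finset.sum_smul, smul_smul]
    refine Finset.sum_congr rfl fun a _ => ?_
    rw [Finset.sum_comm]
    refine Finset.sum_congr rfl fun b _ => ?_
    rw [Finset.sum_comm]
  rw [h1, h2]
  simp only [H.coassoc]

theorem sw_counit_left (q : ι) (F : ι → V) :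
    H.sw q (fun s t => H.counit s • F t) = F q := by
  simp only [sw, smul_smul]
  rw [Finset.sum_comm]
  simp only [← Finset.sum_smul, H.counit_comul]
  simp

theorem sw_counit_right (q : ι) (F : ι → V) :
    H.sw q (fun s t => H.counit t • F s) = F q := by
  simp only [sw, smul_smul]
  simp only [← Finset.sum_smul, H.comul_counit]
  simp

theorem map_sw (f : V →ₗ[k] W) (q : ι) (F : ι → ι → V) :
    f (H.sw q F) = H.sw q (fun s t => f (F s t)) := by
  simp [sw]

theorem map_mm (f : V →ₗ[k] W) (a b : ι) (F : ι → V) :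
    f (H.mm a b F) = H.mm a b (fun s => f (F s)) := by
  simp [mm]

theorem map_on (f : V →ₗ[k] W) (F : ι → V) :
    f (H.on F) = H.on (fun s => f (F s)) := by
  simp [on]

theorem map_ap (f : V →ₗ[k] W) (M : ι → ι → k) (q : ι) (F : ι → V) :
    f (ap M F q) = ap M (fun s => f (F s)) q := by
  simp [ap]

theorem mul_sw (c : R) (q : ι) (F : ι → ι → R) :
    c * H.sw q F = H.sw q (fun s t => c * F s t) := H.map_sw (LinearMap.mulLeft k c) q F
theorem sw_mul (c : R) (q : ι) (F : ι → ι → R) :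
    H.sw q F * c = H.sw q (fun s t => F s t * c) := H.map_sw (LinearMap.mulRight k c) q F
theorem mul_ap (c : R) (M : ι → ι → k) (q : ι) (F : ι → R) :
    c * ap M F q = ap M (fun s => c * F s) q := map_ap (LinearMap.mulLeft k c) M q F
theorem ap_mul (c : R) (M : ι → ι → k) (q : ι) (F : ι → R) :
    ap M F q * c = ap M (fun s => F s * c) q := map_ap (LinearMap.mulRight k c) M q F
theorem mul_mm (c : R) (a b : ι) (F : ι → R) :
    c * H.mm a b F = H.mm a b (fun s => c * F s) := H.map_mm (LinearMap.mulLeft k c) a b F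
theorem mm_mul (c : R) (a b : ι) (F : ι → R) :
    H.mm a b F * c = H.mm a b (fun s => F s * c) := H.map_mm (LinearMap.mulRight k c) a b F

theorem sw_smul (c : k) (q : ι) (F : ι → ι → V) :
    H.sw q (fun s t => c • F s t) = c • H.sw q F :=
  (H.map_sw (LinearMap.lsmul k V c) q F).symm

theorem sw_ap (M : ι → ι → k) (q p : ι) (F : ι → ι → ι → V) :
    H.sw q (fun s t => ap M (F s t) p) = ap M (fun x => H.sw q (fun s t => F s t x)) p := by
  simp only [sw, ap, Finset.smul_sum]
  rw [Finset.sum_congr rfl (fun c _ => Finset.sum_comm)]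
  rw [Finset.sum_comm]
  simp only [smul_comm (M p _)]

theorem sw_sw (q p : ι) (F : ι → ι → ι → ι → V) :
    H.sw q (fun s t => H.sw p (fun a b => F s t a b)) =
      H.sw p (fun a b => H.sw q (fun s t => F s t a b)) := by
  simp only [sw, Finset.smul_sum]
  rw [Finset.sum_congr rfl (fun c _ => Finset.sum_comm)]
  rw [Finset.sum_comm]
  refine Finset.sum_congr rfl fun a _ => ?_
  rw [Finset.sum_congr rfl (fun c _ => Finset.sum_comm)]
  rw [Finset.sum_comm]
  simp only [smul_comm (H.comul p _ _)]

theorem ap_ap (M N : ι → ι → k) (q p : ι) (F : ι → ι → V) :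
    ap M (fun s => ap N (fun t => F s t) p) q = ap N (fun t => ap M (fun s => F s t) q) p := by
  simp only [ap, Finset.smul_sum]
  rw [Finset.sum_comm]
  simp only [smul_comm (M q _)]

theorem ap_S_Sinv (f : ι → V) : ap H.S (ap H.Sinv f) = f := by
  funext q
  simp only [ap, Finset.smul_sum, smul_smul]
  rw [Finset.sum_comm]
  simp only [← Finset.sum_smul, H.S_Sinv]
  simp

theorem ap_Sinv_S (f : ι → V) : ap H.Sinv (ap H.S f) = f := by
  funext q
  simp only [ap, Finset.smul_sum, smul_smul]
  rw [Finset.sum_comm]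
  simp only [← Finset.sum_smul, H.Sinv_S]
  simp

theorem mm_sw (a b : ι) (F : ι → ι → V) :
    H.mm a b (fun r => H.sw r F) = H.sw a (fun a1 a2 => H.sw b (fun b1 b2 =>
      H.mm a1 b1 (fun s => H.mm a2 b2 (fun t => F s t)))) := by
  have h1 : H.mm a b (fun r => H.sw r F) =
      ∑ s, ∑ t, (∑ r, H.mul a b r * H.comul r s t) • F s t := by
    simp only [mm, sw, Finset.smul_sum, Finset.sum_smul, smul_smul]
    rw [Finset.sum_comm]
    refine Finset.sum_congr rfl fun a _ => ?_
    rw [Finset.sum_comm]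
  rw [h1]
  simp only [H.comul_mul]
  simp only [mm, sw, Finset.smul_sum, Finset.sum_smul, smul_smul]
  simp only [← Fintype.sum_prod_type']
  refine Fintype.sum_equiv
    { toFun := fun x => (x.2.2.1, x.2.2.2.1, x.2.2.2.2.1, x.2.2.2.2.2, x.1, x.2.1)
      invFun := fun x => (x.2.2.2.2.1, x.2.2.2.2.2, x.1, x.2.1, x.2.2.1, x.2.2.2.1)
      left_inv := fun x => rfl
      right_inv := fun x => rfl } _ _ ?_
  rintro ⟨s, t, a1, a2, b1, b2⟩
  simp only [Equiv.coe_fn_mk]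
  congr 1
  ring

theorem on_sw (F : ι → ι → V) :
    H.on (fun r => H.sw r F) = H.on (fun s => H.on (fun t => F s t)) := by
  have h1 : H.on (fun r => H.sw r F) =
      ∑ s, ∑ t, (∑ r, H.one r * H.comul r s t) • F s t := by
    simp only [on, sw, Finset.smul_sum, Finset.sum_smul, smul_smul]
    rw [Finset.sum_comm]
    refine Finset.sum_congr rfl fun a _ => ?_
    rw [Finset.sum_comm]
  rw [h1]
  simp only [H.comul_one, on, Finset.smul_sum, smul_smul]

theorem mm_counit (a b : ι) (v : V) :
    H.mm a b (fun r => H.counit r • v) = H.counit a • H.counit b • v := by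
  simp only [mm, smul_smul, ← Finset.sum_smul, H.counit_mul]

theorem on_counit (v : V) : H.on (fun r => H.counit r • v) = v := by
  simp only [on, smul_smul, ← Finset.sum_smul, H.counit_one, one_smul]

theorem anti_left (q : ι) (f : ι → V) :
    H.sw q (fun a b => ap H.S (fun s => H.mm s b f) a) = H.counit q • H.on f := by
  simp only [on, Finset.smul_sum, smul_smul, ← H.antipode_left]
  simp only [sw, ap, mm, Finset.smul_sum, Finset.sum_smul, smul_smul]
  simp only [← Fintype.sum_prod_type']
  refine Fintype.sum_equiv
    { toFun := fun x => (x.2.2.2, x.1, x.2.1, x.2.2.1)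
      invFun := fun x => (x.2.1, x.2.2.1, x.2.2.2, x.1)
      left_inv := fun x => rfl
      right_inv := fun x => rfl } _ _ ?_
  rintro ⟨s, t, a1, a2⟩
  simp only [Equiv.coe_fn_mk, mul_assoc]

theorem anti_right (q : ι) (f : ι → V) :
    H.sw q (fun a b => ap H.S (fun s => H.mm a s f) b) = H.counit q • H.on f := by
  simp only [on, Finset.smul_sum, smul_smul, ← H.antipode_right]
  simp only [sw, ap, mm, Finset.smul_sum, Finset.sum_smul, smul_smul]
  simp only [← Fintype.sum_prod_type']
  refine Fintype.sum_equiv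
    { toFun := fun x => (x.2.2.2, x.1, x.2.1, x.2.2.1)
      invFun := fun x => (x.2.1, x.2.2.1, x.2.2.2, x.1)
      left_inv := fun x => rfl
      right_inv := fun x => rfl } _ _ ?_
  rintro ⟨s, t, a1, a2⟩
  simp only [Equiv.coe_fn_mk, mul_assoc]

/-- `α` is an algebra map from `H`. -/
def IsRep (α : ι → R) : Prop := (∀ a b, α a * α b = H.mm a b α) ∧ H.on α = 1

variable {H}

theorem IsRep.left {α : ι → R} (h : H.IsRep α) (q : ι) :
    H.sw q (fun a b => ap H.S α a * α b) = H.counit q • 1 := by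
  rw [← h.2, ← H.anti_left]
  simp only [ap_mul, h.1]

theorem IsRep.right {α : ι → R} (h : H.IsRep α) (q : ι) :
    H.sw q (fun a b => α a * ap H.S α b) = H.counit q • 1 := by
  rw [← h.2, ← H.anti_right]
  simp only [mul_ap, h.1]

theorem IsRep.one_S {α : ι → R} (h : H.IsRep α) : H.on (ap H.S α) = 1 := by
  have h1 : H.on (fun r => H.sw r (fun a b => ap H.S α a * α b)) = 1 := by
    simp only [h.left, on_counit]
  rw [on_sw] at h1
  have h2 : ∀ s, H.on (fun t => ap H.S α s * α t) = ap H.S α s := fun s => by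
    have := H.map_on (LinearMap.mulLeft k (ap H.S α s)) α
    simp only [LinearMap.mulLeft_apply, h.2, _root_.mul_one] at this
    exact this.symm
  simpa only [h2] using h1

theorem IsRep.S_mul {α : ι → R} (h : H.IsRep α) (a b : ι) :
    H.mm a b (ap H.S α) = ap H.S α b * ap H.S α a := by
  set σ := ap H.S α with hσ
  -- first product
  have e1 : ∀ a b, H.sw a (fun a1 a2 => H.sw b (fun b1 b2 =>
      H.mm a1 b1 σ * (α a2 * α b2))) = H.counit a • H.counit b • (1 : R) := by
    intro a b
    have h0 : H.mm a b (fun r => H.sw r (fun s t => σ s * α t)) =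
        H.counit a • H.counit b • (1 : R) := by
      rw [← H.mm_counit a b (1 : R)]
      congr 1
      funext r
      exact h.left r
    rw [← h0, mm_sw]
    congr 1; funext a1 a2; congr 1; funext b1 b2
    rw [h.1, mm_mul]
    congr 1; funext s
    rw [mul_mm]
  have e2 : ∀ a b, H.sw a (fun a2 a3 => H.sw b (fun b2 b3 =>
      (α a2 * α b2) * (σ b3 * σ a3))) = H.counit a • H.counit b • (1 : R) := by
    intro a b
    have : ∀ a2 a3, H.sw b (fun b2 b3 => (α a2 * α b2) * (σ b3 * σ a3)) =
        H.counit b • (α a2 * σ a3) := by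
      intro a2 a3
      have := h.right b
      have h3 := congrArg (fun z => α a2 * z * σ a3) this
      simp only [mul_sw, sw_mul] at h3
      simpa [mul_assoc] using h3
    simp only [this]
    rw [sw_smul, h.right, smul_comm]
  have e3 : H.sw a (fun a1 a' => H.sw b (fun b1 b' =>
      H.mm a1 b1 σ * (H.counit a' • H.counit b' • (1 : R)))) = H.mm a b σ := by
    simp only [mul_smul_comm, _root_.mul_one]
    simp only [sw_smul, sw_counit_right]
  have e4 : H.sw a (fun a' a3 => H.sw b (fun b' b3 =>
      (H.counit a' • H.counit b' • (1 : R)) * (σ b3 * σ a3))) = σ b * σ a := by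
    simp only [smul_mul_assoc, _root_.one_mul]
    simp only [sw_smul]
    rw [H.sw_counit_left a (fun a3 => H.sw b (fun s t => H.counit s • (σ t * σ a3)))]
    rw [H.sw_counit_left b (fun b3 => σ b3 * σ a)]
  have e5 : ∀ F : ι → ι → ι → ι → ι → ι → R,
     H.sw a (fun a1 a' => H.sw b (fun b1 b' => H.sw a' (fun a2 a3 => H.sw b' (fun b2 b3 => F a1 a2 a3 b1 b2 b3)))) =
     H.sw a (fun a' a3 => H.sw b (fun b' b3 => H.sw a' (fun a1 a2 => H.sw b' (fun b1 b2 => F a1 a2 a3 b1 b2 b3)))) := by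
    intro F
    have l : ∀ a1 a', H.sw b (fun b1 b' => H.sw a' (fun a2 a3 => H.sw b' (fun b2 b3 => F a1 a2 a3 b1 b2 b3))) = H.sw a' (fun a2 a3 => H.sw b (fun b1 b' => H.sw b' (fun b2 b3 => F a1 a2 a3 b1 b2 b3))) := fun _ _ => H.sw_sw _ _ _
    have r : ∀ a' a3, H.sw b (fun b' b3 => H.sw a' (fun a1 a2 => H.sw b' (fun b1 b2 => F a1 a2 a3 b1 b2 b3))) = H.sw a' (fun a1 a2 => H.sw b (fun b' b3 => H.sw b' (fun b1 b2 => F a1 a2 a3 b1 b2 b3))) := fun _ _ => H.sw_sw _ _ _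
    simp only [l, r, sw_assoc]
  simp only [← e2, mul_sw] at e3
  simp only [← e1, sw_mul] at e4
  rw [← e3, ← e4, e5]
  simp only [mul_assoc]

variable (H)

/-- the right regular representation. -/
def reg (i : ι) : Matrix ι ι k := fun a r => H.mul a i r

theorem reg_rep : H.IsRep H.reg := by
  constructor
  · intro a b
    ext i j
    simp only [Matrix.mul_apply, mm, Matrix.sum_apply, Matrix.smul_apply, reg, smul_eq_mul, H.assoc]
  · ext i j
    simp only [on, Matrix.sum_apply, Matrix.smul_apply, reg, smul_eq_mul, H.mul_one, Matrix.one_apply]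

theorem reg_inj (c d : ι → k) (h : ∑ i, c i • H.reg i = ∑ i, d i • H.reg i) : c = d := by
  have key : ∀ c : ι → k, ∀ r, ∑ a, H.one a * (∑ i, c i • H.reg i) a r = c r := by
    intro c r
    simp only [Matrix.sum_apply, Matrix.smul_apply, reg, smul_eq_mul, Finset.mul_sum]
    rw [Finset.sum_comm]
    simp only [mul_left_comm (H.one _), ← Finset.mul_sum, H.one_mul]
    simp
  funext r
  rw [← key c, ← key d, h]

theorem S_mul (a b t : ι) : ∑ r, H.mul a b r * H.S r t =
    ∑ s, ∑ u, H.S b s * H.S a u * H.mul s u t := by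
  have h := H.reg_rep.S_mul a b
  refine congrFun (H.reg_inj (fun t => ∑ r, H.mul a b r * H.S r t)
    (fun t => ∑ s, ∑ u, H.S b s * H.S a u * H.mul s u t) ?_) t
  simp only [mul_ap, ap_mul, H.reg_rep.1] at h
  simp only [ap, mm, Finset.smul_sum, smul_smul] at h
  simp only [Finset.sum_smul]
  rw [Finset.sum_comm, h]
  simp only [← Fintype.sum_prod_type']
  refine Fintype.sum_equiv
    { toFun := fun x => (x.2.2, x.2.1, x.1)
      invFun := fun x => (x.2.2, x.2.1, x.1)
      left_inv := fun x => rfl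
      right_inv := fun x => rfl } _ _ ?_
  rintro ⟨a1, a2, a3⟩
  simp only [Equiv.coe_fn_mk]
  congr 1
  ring

theorem S_one (t : ι) : ∑ r, H.one r * H.S r t = H.one t := by
  refine congrFun (H.reg_inj (fun t => ∑ r, H.one r * H.S r t) H.one ?_) t
  have h := H.reg_rep.one_S
  rw [← H.reg_rep.2] at h
  simp only [on, ap, Finset.smul_sum, smul_smul] at h
  rw [← h, Finset.sum_comm]
  simp only [Finset.sum_smul]

theorem on_S (f : ι → V) : H.on (ap H.S f) = H.on f := by
  simp only [on, ap, Finset.smul_sum, smul_smul]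
  rw [Finset.sum_comm]
  simp only [← Finset.sum_smul, H.S_one]

theorem on_Sinv (f : ι → V) : H.on (ap H.Sinv f) = H.on f := by
  rw [← on_S, ap_S_Sinv]

/-- `S a * S b = S (b a)`. -/
theorem S_mul_f (a b : ι) (f : ι → V) :
    ap H.S (fun x => ap H.S (fun y => H.mm x y f) b) a = H.mm b a (ap H.S f) := by
  have h1 : H.mm b a (ap H.S f) = ∑ t, (∑ r, H.mul b a r * H.S r t) • f t := by
    simp only [mm, ap, Finset.smul_sum, smul_smul, Finset.sum_smul]
    rw [Finset.sum_comm]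
  rw [h1]
  simp only [H.S_mul]
  simp only [mm, ap, Finset.smul_sum, smul_smul, Finset.sum_smul]
  simp only [← Fintype.sum_prod_type']
  refine Fintype.sum_equiv
    { toFun := fun x => (x.2.2, x.1, x.2.1)
      invFun := fun x => (x.2.1, x.2.2, x.1)
      left_inv := fun x => rfl
      right_inv := fun x => rfl } _ _ ?_
  rintro ⟨a1, a2, a3⟩
  simp only [Equiv.coe_fn_mk]
  congr 1
  ring

theorem Sinv_mul_f (a b : ι) (f : ι → V) :
    ap H.Sinv (fun x => ap H.Sinv (fun y => H.mm x y f) b) a = H.mm b a (ap H.Sinv f) := by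
  have h : ∀ x y, H.mm x y f = ap H.S (fun p => ap H.S (fun q => H.mm p q (ap H.Sinv f)) x) y := by
    intro x y
    rw [S_mul_f, ap_S_Sinv]
  simp only [h]
  have h2 : ∀ x, ap H.Sinv (fun y => ap H.S (fun p => ap H.S (fun q => H.mm p q (ap H.Sinv f)) x) y) b
      = ap H.S (fun q => H.mm b q (ap H.Sinv f)) x := fun x =>
    congrFun (H.ap_Sinv_S (fun p => ap H.S (fun q => H.mm p q (ap H.Sinv f)) x)) b
  simp only [h2]
  exact congrFun (H.ap_Sinv_S (fun q => H.mm b q (ap H.Sinv f))) a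

/-- `a₂ S⁻¹(a₁) = ε`. -/
theorem P2 (q : ι) (f : ι → V) :
    H.sw q (fun s t => ap H.Sinv (fun w => H.mm t w f) s) = H.counit q • H.on f := by
  have h : ∀ t w, H.mm t w f = ap H.S (fun p => ap H.S (fun q => H.mm p q (ap H.Sinv f)) t) w := by
    intro x y
    rw [S_mul_f, ap_S_Sinv]
  simp only [h]
  rw [← H.on_Sinv, ← H.anti_right]
  congr 1
  funext s t
  exact congrFun (H.ap_Sinv_S (fun p => ap H.S (fun q => H.mm p q (ap H.Sinv f)) t)) s

/-- `S⁻¹(a₂) a₁ = ε`. -/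
theorem P1 (q : ι) (f : ι → V) :
    H.sw q (fun s t => ap H.Sinv (fun w => H.mm w s f) t) = H.counit q • H.on f := by
  have h : ∀ w s, H.mm w s f = ap H.S (fun q => ap H.S (fun p => H.mm p q (ap H.Sinv f)) s) w := by
    intro x y
    rw [ap_ap, S_mul_f, ap_S_Sinv]
  simp only [h]
  rw [← H.on_Sinv, ← H.anti_left]
  congr 1
  funext s t
  exact congrFun (H.ap_Sinv_S (fun q => ap H.S (fun p => H.mm p q (ap H.Sinv f)) s)) t

/-- the dual of `H`, with opposite product and coproduct. -/
def dual : FinHopfSC k ι where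
  mul := fun s t r => H.comul r t s
  one := H.counit
  comul := fun r s t => H.mul t s r
  counit := H.one
  S := fun t r => H.S r t
  Sinv := fun t r => H.Sinv r t
  assoc := by
    intro a b c r
    have := H.coassoc r c b a
    simp only [mul_comm (H.comul r _ _)] at this
    exact this.symm
  one_mul := by
    intro b r
    have := H.comul_counit r b
    simp only [mul_comm (H.comul r _ _)] at this
    simp only [this, eq_comm]
  mul_one := by
    intro b r
    have := H.counit_comul r b
    simp only [mul_comm (H.comul r _ _)] at this
    simp only [this, eq_comm]
  coassoc := by
    intro r a b c
    have := H.assoc c b a r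
    simp only [mul_comm (H.mul _ _ r)]
    exact this.symm
  counit_comul := by
    intro r t
    have := H.mul_one t r
    simp only [mul_comm (H.mul _ _ r)]
    simp only [this, eq_comm]
  comul_counit := by
    intro r t
    have := H.one_mul t r
    simp only [mul_comm (H.mul _ _ r)]
    simp only [this, eq_comm]
  comul_mul := by
    intro a b s t
    have := H.comul_mul t s b a
    simp only [mul_comm (H.comul _ b a)]
    rw [this]
    simp only [← Fintype.sum_prod_type']
    refine Fintype.sum_equiv
      { toFun := fun x => (x.2.2.2, x.2.1, x.2.2.1, x.1)
        invFun := fun x => (x.2.2.2, x.2.1, x.2.2.1, x.1)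
        left_inv := fun x => rfl
        right_inv := fun x => rfl } _ _ ?_
    rintro ⟨s, t, a1, a2⟩
    simp only [Equiv.coe_fn_mk]
    ring
  counit_mul := by
    intro a b
    have := H.comul_one b a
    rw [mul_comm (H.one a), ← this]
    exact Finset.sum_congr rfl fun r _ => mul_comm _ _
  comul_one := by
    intro s t
    have := H.counit_mul t s
    rw [mul_comm (H.counit s), ← this]
    exact Finset.sum_congr rfl fun r _ => mul_comm _ _
  counit_one := by
    have := H.counit_one
    simp only [mul_comm (H.counit _)]
    exact this
  antipode_left := by
    intro r t
    rw [mul_comm, ← H.antipode_right]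
    simp only [← Fintype.sum_prod_type']
    refine Fintype.sum_equiv
      { toFun := fun x => (x.2.1, x.2.2, x.1)
        invFun := fun x => (x.2.2, x.1, x.2.1)
        left_inv := fun x => rfl
        right_inv := fun x => rfl } _ _ ?_
    rintro ⟨s, t, a1⟩
    simp only [Equiv.coe_fn_mk]
    ring
  antipode_right := by
    intro r t
    rw [mul_comm, ← H.antipode_left]
    simp only [← Fintype.sum_prod_type']
    refine Fintype.sum_equiv
      { toFun := fun x => (x.2.2, x.1, x.2.1)
        invFun := fun x => (x.2.1, x.2.2, x.1)
        left_inv := fun x => rfl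
        right_inv := fun x => rfl } _ _ ?_
    rintro ⟨s, t, a1⟩
    simp only [Equiv.coe_fn_mk]
    ring
  S_Sinv := by
    intro a r
    have := H.Sinv_S r a
    simp only [mul_comm (H.S _ _)]
    simp only [this, eq_comm]
  Sinv_S := by
    intro a r
    have := H.S_Sinv r a
    simp only [mul_comm (H.Sinv _ _)]
    simp only [this, eq_comm]

theorem S_comul (q : ι) (F : ι → ι → V) :
    ap H.S (fun b => H.sw b F) q =
      H.sw q (fun q1 q2 => ap H.S (fun t => ap H.S (fun s => F s t) q2) q1) := by
  have h1 : ap H.S (fun b => H.sw b F) q =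
      ∑ s, ∑ t, (∑ b, H.comul b s t * H.S q b) • F s t := by
    simp only [ap, sw, Finset.smul_sum, Finset.sum_smul, smul_smul, mul_comm (H.S _ _)]
    rw [Finset.sum_comm]
    refine Finset.sum_congr rfl fun a _ => ?_
    rw [Finset.sum_comm]
  have h2 : ∀ s t, ∑ b, H.comul b s t * H.S q b =
      ∑ x, ∑ y, H.S x s * H.S y t * H.comul q y x := fun s t => H.dual.S_mul t s q
  rw [h1]
  simp only [h2]
  simp only [ap, sw, Finset.smul_sum, Finset.sum_smul, smul_smul]
  simp only [← Fintype.sum_prod_type']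
  refine Fintype.sum_equiv
      { toFun := fun x => (x.2.2.2, x.2.2.1, x.2.1, x.1)
        invFun := fun x => (x.2.2.2, x.2.2.1, x.2.1, x.1)
        left_inv := fun x => rfl
        right_inv := fun x => rfl } _ _ ?_
  rintro ⟨s, t, a1, a2⟩
  simp only [Equiv.coe_fn_mk]
  congr 1
  ring

theorem Sinv_mul (t u r : ι) : ∑ y, H.mul t u y * H.Sinv y r =
    ∑ s, ∑ w, H.Sinv u s * (H.Sinv t w * H.mul s w r) := by
  have := H.Sinv_mul_f u t (fun y => if y = r then (1 : k) else 0)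
  simp only [ap, mm, smul_eq_mul, mul_ite, _root_.mul_one, mul_zero, Finset.sum_ite_eq',
    Finset.mem_univ, if_true, Finset.mul_sum] at this
  simpa using this.symm

variable {H}

theorem IsRep.P1 {α : ι → R} (h : H.IsRep α) (q : ι) :
    H.sw q (fun a b => ap H.Sinv α b * α a) = H.counit q • 1 := by
  rw [← h.2, ← H.P1]
  simp only [ap_mul, h.1]

theorem IsRep.P2 {α : ι → R} (h : H.IsRep α) (q : ι) :
    H.sw q (fun a b => α b * ap H.Sinv α a) = H.counit q • 1 := by
  rw [← h.2, ← H.P2]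
  simp only [mul_ap, h.1]

theorem IsRep.Sinv_mul {α : ι → R} (h : H.IsRep α) (a b : ι) :
    H.mm a b (ap H.Sinv α) = ap H.Sinv α b * ap H.Sinv α a := by
  rw [← H.Sinv_mul_f, ap_mul]
  simp only [mul_ap, h.1]

theorem IsRep.P3 {α : ι → R} (h : H.IsRep α) (q : ι) :
    H.sw q (fun a b => ap H.Sinv (ap H.Sinv α) a * ap H.Sinv α b) = H.counit q • 1 := by
  rw [← h.2, ← H.on_Sinv, ← H.P2]
  simp only [h.Sinv_mul, ap_mul]

/-- conjugation by the element `v`. -/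
theorem IsRep.conj {α : ι → R} (h : H.IsRep α) (ξ : ι → R)
    (hE : ∀ q r, H.sw q (fun s t => α s * ∑ u, H.mul t u r • ξ u) =
      H.sw q (fun s t => (∑ u, H.mul u s r • ξ u) * α t)) (q : ι) :
    (∑ r, ap H.Sinv α r * ξ r) * α q =
      ap H.Sinv (ap H.Sinv α) q * (∑ r, ap H.Sinv α r * ξ r) := by
  set σ := ap H.Sinv α with hσ
  set v := ∑ r, σ r * ξ r with hv
  have sum_sw : ∀ q, ∀ F : ι → ι → ι → R,
      ∑ r, H.sw q (F r) = H.sw q (fun s t => ∑ r, F r s t) := by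
    intro q F
    simp only [sw, Finset.smul_sum]
    rw [Finset.sum_comm]
    refine Finset.sum_congr rfl fun a _ => ?_
    rw [Finset.sum_comm]
  have key : ∀ q, H.sw q (fun s t => σ s * v * α t) = H.counit q • v := by
    intro q
    have h1 : ∑ r, σ r * H.sw q (fun s t => α s * ∑ u, H.mul t u r • ξ u) =
        H.counit q • v := by
      simp only [mul_sw, sum_sw]
      have : ∀ s t, ∑ r, σ r * (α s * ∑ u, H.mul t u r • ξ u) =
          ∑ u, σ u * (σ t * α s) * ξ u := by
        intro s t
        simp only [Finset.mul_sum, mul_smul_comm]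
        rw [Finset.sum_comm]
        refine Finset.sum_congr rfl fun u _ => ?_
        rw [← mul_assoc (σ u), ← h.Sinv_mul, mm]
        simp only [Finset.sum_mul, smul_mul_assoc, mul_assoc, hσ]
      simp only [this, ← sum_sw]
      simp only [← mul_sw, ← sw_mul, hσ, h.P1]
      simp [hv, Finset.smul_sum, hσ]
    have h2 : ∑ r, σ r * H.sw q (fun s t => (∑ u, H.mul u s r • ξ u) * α t) =
        H.sw q (fun s t => σ s * v * α t) := by
      simp only [mul_sw, sum_sw]
      congr 1
      funext s t
      simp only [← mul_assoc, ← Finset.sum_mul]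
      congr 1
      simp only [Finset.mul_sum, mul_smul_comm, hv]
      rw [Finset.sum_comm]
      refine Finset.sum_congr rfl fun u _ => ?_
      rw [← mul_assoc, ← h.Sinv_mul, mm]
      simp only [Finset.sum_mul, smul_mul_assoc, hσ]
    rw [← h2, ← h1]
    simp only [hE]
  have k1 : H.sw q (fun a c => ap H.Sinv σ a * H.sw c (fun s t => σ s * v * α t)) =
      ap H.Sinv σ q * v := by
    simp only [key, mul_smul_comm]
    exact H.sw_counit_right q (fun a => ap H.Sinv σ a * v)
  have k2 : H.sw q (fun a c => H.sw a (fun s t => ap H.Sinv σ s * σ t) * (v * α c)) =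
      v * α q := by
    simp only [hσ, h.P3, smul_mul_assoc, _root_.one_mul]
    exact H.sw_counit_left q (fun a => v * α a)
  rw [← k1, ← k2]
  simp only [mul_sw, sw_mul, sw_assoc, mul_assoc]

variable (H)

/-- `x(c ?)`. -/
def lam (c : ι) : Module.End k (ι → V) where
  toFun := fun Y r => ∑ u, H.mul c u r • Y u
  map_add' := by intro x y; funext r; simp [Finset.sum_add_distrib]
  map_smul' := by intro x y; funext r; simp [Finset.smul_sum, smul_comm x]

/-- `x(? d)`. -/
def rho (d : ι) : Module.End k (ι → V) where
  toFun := fun Y r => ∑ u, H.mul u d r • Y u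
  map_add' := by intro x y; funext r; simp [Finset.sum_add_distrib]
  map_smul' := by intro x y; funext r; simp [Finset.smul_sum, smul_comm x]

/-- `x ∘ S⁻¹`. -/
def tau : Module.End k (ι → V) where
  toFun := fun Y r => ∑ y, H.Sinv y r • Y y
  map_add' := by intro x y; funext r; simp [Finset.sum_add_distrib]
  map_smul' := by intro x y; funext r; simp [Finset.smul_sum, smul_comm x]

theorem lam_rep : H.IsRep (H.lam : ι → Module.End k (ι → V)) := by
  constructor
  · intro a b
    refine LinearMap.ext fun Y => ?_
    funext r
    simp only [Module.End.mul_apply, mm, LinearMap.sum_apply, LinearMap.smul_apply, Finset.sum_apply,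
      Pi.smul_apply]
    simp only [lam, LinearMap.coe_mk, AddHom.coe_mk, Finset.smul_sum, smul_smul]
    rw [Finset.sum_comm]
    rw [Finset.sum_comm (f := fun x i => (H.mul a b x * H.mul x i r) • Y i)]
    simp only [← Finset.sum_smul, H.assoc, mul_comm (H.mul a _ r)]
  · refine LinearMap.ext fun Y => ?_
    funext r
    simp only [on, LinearMap.sum_apply, LinearMap.smul_apply, Finset.sum_apply, Pi.smul_apply]
    simp only [lam, LinearMap.coe_mk, AddHom.coe_mk, Finset.smul_sum, smul_smul]
    rw [Finset.sum_comm]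
    simp only [← Finset.sum_smul, H.one_mul]
    simp

theorem lam_rho (a b : ι) (Y : ι → V) : H.lam a (H.rho b Y) = H.rho b (H.lam a Y) := by
  funext r
  simp only [lam, rho, LinearMap.coe_mk, AddHom.coe_mk, Finset.smul_sum, smul_smul]
  rw [Finset.sum_comm]
  rw [Finset.sum_comm (f := fun x i => (H.mul x b r * H.mul a i x) • Y i)]
  simp only [← Finset.sum_smul, mul_comm (H.mul _ b r), H.assoc, mul_comm (H.mul a _ r)]

theorem tau_lam (t : ι) (Y : ι → V) :
    H.tau (H.lam t Y) = ap H.Sinv (fun w => H.rho w (H.tau Y)) t := by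
  funext r
  simp only [ap, Finset.sum_apply, Pi.smul_apply]
  simp only [tau, lam, rho, LinearMap.coe_mk, AddHom.coe_mk, Finset.smul_sum, smul_smul]
  rw [Finset.sum_comm]
  simp only [← Finset.sum_smul, mul_comm (H.Sinv _ r), H.Sinv_mul]
  simp only [Finset.sum_smul]
  simp only [← Fintype.sum_prod_type']
  refine Fintype.sum_equiv
      { toFun := fun x => (x.2.2, x.2.1, x.1)
        invFun := fun x => (x.2.2, x.2.1, x.1)
        left_inv := fun x => rfl
        right_inv := fun x => rfl } _ _ ?_
  rintro ⟨s, t, a1⟩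
  simp only [Equiv.coe_fn_mk]
  congr 1
  ring

theorem tau_rho (t : ι) (Y : ι → V) :
    H.tau (H.rho t Y) = ap H.Sinv (fun w => H.lam w (H.tau Y)) t := by
  funext r
  simp only [ap, Finset.sum_apply, Pi.smul_apply]
  simp only [tau, lam, rho, LinearMap.coe_mk, AddHom.coe_mk, Finset.smul_sum, smul_smul]
  rw [Finset.sum_comm]
  simp only [← Finset.sum_smul, mul_comm (H.Sinv _ r), H.Sinv_mul]
  simp only [Finset.sum_smul]
  simp only [← Fintype.sum_prod_type']
  refine Fintype.sum_equiv
      { toFun := fun x => (x.2.1, x.2.2, x.1)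
        invFun := fun x => (x.2.2, x.1, x.2.1)
        left_inv := fun x => rfl
        right_inv := fun x => rfl } _ _ ?_
  rintro ⟨s, t, a1⟩
  simp only [Equiv.coe_fn_mk]
  congr 1
  ring

theorem lam_map (f : V →ₗ[k] W) (a : ι) (Y : ι → V) :
    H.lam a (fun r => f (Y r)) = fun r => f (H.lam a Y r) := by
  funext r; simp [lam]
theorem rho_map (f : V →ₗ[k] W) (a : ι) (Y : ι → V) :
    H.rho a (fun r => f (Y r)) = fun r => f (H.rho a Y r) := by
  funext r; simp [rho]
theorem tau_map (f : V →ₗ[k] W) (Y : ι → V) :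
    H.tau (fun r => f (Y r)) = fun r => f (H.tau Y r) := by
  funext r; simp [tau]

theorem sw_apply (q : ι) (F : ι → ι → Module.End k V) (v : V) :
    H.sw q F v = H.sw q (fun s t => F s t v) :=
  H.map_sw (LinearMap.applyₗ v) q F
theorem ap_apply (M : ι → ι → k) (q : ι) (F : ι → Module.End k V) (v : V) :
    ap M F q v = ap M (fun s => F s v) q :=
  map_ap (LinearMap.applyₗ v) M q F

theorem P1_lam (q : ι) (Y : ι → V) :
    H.sw q (fun a b => ap H.Sinv H.lam b (H.lam a Y)) = H.counit q • Y := by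
  have := congrArg (fun z => z Y) ((H.lam_rep (V := V)).P1 q)
  simp only [sw_apply] at this
  simpa using this

theorem P2_lam (q : ι) (Y : ι → V) :
    H.sw q (fun a b => H.lam b (ap H.Sinv H.lam a Y)) = H.counit q • Y := by
  have := congrArg (fun z => z Y) ((H.lam_rep (V := V)).P2 q)
  simp only [sw_apply] at this
  simpa using this

/-- the exchange operator is injective. -/
theorem exch_inj (N P : ι → ι → V)
    (h : ∀ q, H.sw q (fun s t => H.lam t (N s)) = H.sw q (fun s t => H.lam t (P s))) : N = P := by
  have key : ∀ N : ι → ι → V, ∀ q, N q = H.sw q (fun c w => ap H.Sinv H.lam w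
      (H.sw c (fun s t => H.lam t (N s)))) := by
    intro N q
    simp only [map_sw, sw_assoc, P1_lam]
    exact (H.sw_counit_right q N).symm
  funext q
  rw [key N, key P]
  simp only [h]

section star
variable {α ξ : ι → R}

theorem star (hE : ∀ q, H.sw q (fun s t => H.lam t (fun r => α s * ξ r)) =
      H.sw q (fun s t => H.rho s (fun r => ξ r * α t))) (q : ι) :
    H.sw q (fun s t => H.lam t (fun r => H.tau ξ r * ap H.S α s)) =
      H.sw q (fun s t => H.rho s (fun r => ap H.S α t * H.tau ξ r)) := by
  have h := congrArg (fun G => ap H.S G q) (funext fun b => congrArg H.tau (hE b))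
  simp only [map_sw, S_comul, tau_lam, tau_rho] at h
  have c1 : ∀ s, H.tau (fun r => α s * ξ r) = fun r => α s * H.tau ξ r := fun s =>
    H.tau_map (LinearMap.mulLeft k (α s)) ξ
  have c2 : ∀ s, H.tau (fun r => ξ r * α s) = fun r => H.tau ξ r * α s := fun s =>
    H.tau_map (LinearMap.mulRight k (α s)) ξ
  simp only [c1, c2] at h
  have d : ∀ G : ι → ι → R, ap H.S (ap H.Sinv G) = G := fun G => H.ap_S_Sinv G
  have l1 : ∀ q1 q2, ap H.S (fun t => ap H.S (fun s => ap H.Sinv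
      (fun w => H.rho w (fun r => α s * H.tau ξ r)) t) q2) q1 =
      H.rho q1 (fun r => ap H.S α q2 * H.tau ξ r) := by
    intro q1 q2
    rw [ap_ap]
    have : ∀ s, ap H.S (fun t => ap H.Sinv (fun w => H.rho w (fun r => α s * H.tau ξ r)) t) q1 =
      H.rho q1 (fun r => α s * H.tau ξ r) := fun s => congrFun (d _) q1
    simp only [this]
    rw [← map_ap]
    congr 1
    funext r
    simp only [ap, Finset.sum_apply, Pi.smul_apply, Finset.sum_mul, smul_mul_assoc]
  have l2 : ∀ q1 q2, ap H.S (fun t => ap H.S (fun s => ap H.Sinv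
      (fun w => H.lam w (fun r => H.tau ξ r * α t)) s) q2) q1 =
      H.lam q2 (fun r => H.tau ξ r * ap H.S α q1) := by
    intro q1 q2
    have : ∀ s, ap H.S (fun t => ap H.Sinv (fun w => H.lam w (fun r => H.tau ξ r * α s)) t) q2 =
      H.lam q2 (fun r => H.tau ξ r * α s) := fun s => congrFun (d _) q2
    simp only [this]
    rw [← map_ap]
    congr 1
    funext r
    simp only [ap, Finset.sum_apply, Pi.smul_apply, Finset.mul_sum, mul_smul_comm]
  simp only [l1, l2] at h
  exact h.symm

/-- from the five-fold cross relation to the exchange relation. -/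
theorem exch_of_cross
    (hc : ∀ q, (fun r => α q * ξ r) = H.sw q (fun a b => H.sw a (fun m n => H.sw b (fun h b2 =>
      H.sw b2 (fun p z => fun r => ap H.Sinv H.lam z (H.lam h (H.rho m (ap H.Sinv H.lam n ξ))) r
        * α p))))) (q : ι) :
    H.sw q (fun s t => H.lam t (fun r => α s * ξ r)) =
      H.sw q (fun s t => H.rho s (fun r => ξ r * α t)) := by
  let ra : ι → Module.End k (ι → R) := fun p => (LinearMap.mulRight k (α p)).compLeft ι
  have hra : ∀ p (Y : ι → R), (fun r => Y r * α p) = ra p Y := fun p Y => rfl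
  have hcl : ∀ p t (Y : ι → R), H.lam t (ra p Y) = ra p (H.lam t Y) := fun p t Y =>
    H.lam_map (LinearMap.mulRight k (α p)) t Y
  have hcr : ∀ p t (Y : ι → R), H.rho t (ra p Y) = ra p (H.rho t Y) := fun p t Y =>
    H.rho_map (LinearMap.mulRight k (α p)) t Y
  replace hc : ∀ q, (fun r => α q * ξ r) = H.sw q (fun a b => H.sw a (fun m n =>
      H.sw b (fun h b2 => H.sw b2 (fun p z =>
        ra p (ap H.Sinv H.lam z (H.lam h (H.rho m (ap H.Sinv H.lam n ξ)))))))) := hc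
  simp only [lam_rho] at hc
  have hc2 : ∀ q, (fun r => α q * ξ r) = H.sw q (fun m s => H.sw s (fun p z =>
      ra p (ap H.Sinv H.lam z (H.rho m ξ)))) := by
    intro q
    rw [hc q, H.sw_assoc q (fun m n b => H.sw b (fun h b2 => H.sw b2 (fun p z =>
      ra p (ap H.Sinv H.lam z (H.rho m (H.lam h (ap H.Sinv H.lam n ξ)))))))]
    congr 1
    funext m s
    rw [← H.sw_assoc s (fun n h b2 => H.sw b2 (fun p z =>
      ra p (ap H.Sinv H.lam z (H.rho m (H.lam h (ap H.Sinv H.lam n ξ))))))]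
    have : ∀ c b2, H.sw c (fun n h => H.sw b2 (fun p z =>
      ra p (ap H.Sinv H.lam z (H.rho m (H.lam h (ap H.Sinv H.lam n ξ)))))) =
      H.counit c • H.sw b2 (fun p z => ra p (ap H.Sinv H.lam z (H.rho m ξ))) := by
      intro c b2
      rw [sw_sw]
      simp only [← map_sw, P2_lam, map_smul, sw_smul]
    simp only [this]
    exact H.sw_counit_left s (fun b2 => H.sw b2 (fun p z => ra p (ap H.Sinv H.lam z (H.rho m ξ))))
  simp only [hc2, hra, map_sw, hcl, hcr]
  rw [H.sw_assoc q (fun m s t => H.sw s (fun p z =>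
      ra p (H.lam t (ap H.Sinv H.lam z (H.rho m ξ)))))]
  congr 1
  funext m s
  rw [H.sw_assoc s (fun p z t => ra p (H.lam t (ap H.Sinv H.lam z (H.rho m ξ))))]
  simp only [← map_sw, P2_lam, map_smul]
  exact H.sw_counit_right s (fun p => ra p (H.rho m ξ))

end star

theorem sw_fun (q r : ι) (F : ι → ι → ι → V) : H.sw q F r = H.sw q (fun s t => F s t r) :=
  H.map_sw (LinearMap.proj r : (ι → V) →ₗ[k] V) q F

theorem map_basis (j : (ι → k) →ₗ[k] V) (x : ι → k) : j x = ∑ i, x i • j (e i) := by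
  have : x = ∑ i, x i • (e i : ι → k) := by
    funext r
    simp [Finset.sum_apply, e]
  conv_lhs => rw [this]
  simp

theorem jX_rtri (j : (ι → k) →ₗ[k] V) (a d : ι) :
    j (H.rtri a d) =
      H.sw a (fun m n => H.rho m (ap H.Sinv H.lam n (fun i => j (e i)))) d := by
  rw [map_basis, sw_fun]
  simp only [ap_apply, map_ap]
  simp only [rtri, sw, ap, Finset.sum_apply, Pi.smul_apply, rho, lam, LinearMap.coe_mk,
    AddHom.coe_mk, Finset.smul_sum, smul_smul, Finset.sum_smul]
  simp only [← Fintype.sum_prod_type']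
  refine Fintype.sum_equiv
      { toFun := fun x => (x.2.1, x.2.2.1, x.2.2.2.2, x.2.2.2.1, x.1)
        invFun := fun x => (x.2.2.2.2, x.1, x.2.1, x.2.2.2.1, x.2.2.1)
        left_inv := fun x => rfl
        right_inv := fun x => rfl } _ _ ?_
  rintro ⟨s, t, a1, a2, a3⟩
  simp only [Equiv.coe_fn_mk]
  congr 1
  ring

theorem jA_ltri (j : (ι → k) →ₗ[k] V) (b c : ι) :
    j (H.ltri b c) =
      H.sw b (fun h b2 => H.sw b2 (fun p z => ap H.Sinv (fun g => H.mul g h c) z • j (e p))) := by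
  rw [map_basis]
  simp only [ltri, sw, ap, Finset.smul_sum, smul_smul, Finset.sum_smul, smul_eq_mul]
  simp only [← Fintype.sum_prod_type']
  refine Fintype.sum_equiv
      { toFun := fun x => (x.2.2.1, x.2.2.2.1, x.1, x.2.2.2.2, x.2.1)
        invFun := fun x => (x.2.2.1, x.2.2.2.2, x.1, x.2.1, x.2.2.2.1)
        left_inv := fun x => rfl
        right_inv := fun x => rfl } _ _ ?_
  rintro ⟨s, t, a1, a2, a3⟩
  simp only [Equiv.coe_fn_mk]
  congr 1
  ring

theorem cross_form (jX jA : (ι → k) →ₗ[k] R)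
    (hcross : ∀ q r, jA (e q) * jX (e r) =
      ∑ a, ∑ b, ∑ c, ∑ d, (H.comul q a b * H.mul c d r) •
        (jX (H.rtri a d) * jA (H.ltri b c))) (q : ι) :
    (fun r => jA (e q) * jX (e r)) =
     H.sw q (fun a b => H.sw a (fun m n => H.sw b (fun h b2 =>
      H.sw b2 (fun p z => fun r => ap H.Sinv H.lam z (H.lam h (H.rho m
        (ap H.Sinv H.lam n (fun i => jX (e i))))) r * jA (e p))))) := by
  funext r
  simp only [hcross, sw_fun]
  have h1 : (∑ a, ∑ b, ∑ c, ∑ d, (H.comul q a b * H.mul c d r) •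
        (jX (H.rtri a d) * jA (H.ltri b c))) =
      H.sw q (fun a b => ∑ c, H.lam c (fun d => jX (H.rtri a d)) r * jA (H.ltri b c)) := by
    simp only [sw, lam, LinearMap.coe_mk, AddHom.coe_mk, Finset.sum_mul, Finset.smul_sum,
      smul_mul_assoc, smul_smul]
  rw [h1]
  congr 1
  funext a b
  have h2 : ∀ Y : ι → R, ∑ c, H.lam c Y r * jA (H.ltri b c) =
      H.sw b (fun h b2 => H.sw b2 (fun p z =>
        ap H.Sinv H.lam z (H.lam h Y) r * jA (e p))) := by
    intro Y
    have h3 : ∀ z h, ap H.Sinv H.lam z (H.lam h Y) r =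
        ∑ c, ap H.Sinv (fun g => H.mul g h c) z • H.lam c Y r := by
      intro z h
      have : ap H.Sinv H.lam z * H.lam h =
          (∑ c, ap H.Sinv (fun g => H.mul g h c) z • H.lam c : Module.End k (ι → R)) := by
        rw [ap_mul]
        simp only [H.lam_rep.1]
        simp only [ap, mm, Finset.smul_sum, Finset.sum_smul, smul_smul, smul_eq_mul]
        rw [Finset.sum_comm]
      have h4 := congrArg (fun z => z Y r) this
      simpa [LinearMap.sum_apply, Finset.sum_apply] using h4
    simp only [jA_ltri, mul_sw, h3, Finset.sum_mul, mul_smul_comm, smul_mul_assoc]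
    simp only [sw, Finset.smul_sum]
    simp only [← Fintype.sum_prod_type']
    refine Fintype.sum_equiv
      { toFun := fun x => (x.2.1, x.2.2.1, x.2.2.2.1, x.2.2.2.2, x.1)
        invFun := fun x => (x.2.2.2.2, x.1, x.2.1, x.2.2.1, x.2.2.2.1)
        left_inv := fun x => rfl
        right_inv := fun x => rfl } _ _ ?_
    rintro ⟨s, t, a1, a2, a3⟩
    rfl
  simp only [← h2]
  have h5 : (fun d => jX (H.rtri a d)) = H.sw a (fun m n => H.rho m
      (ap H.Sinv H.lam n (fun i => jX (e i)))) := by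
    funext d
    exact H.jX_rtri jX a d
  rw [h5]
  let Φ : (ι → R) →ₗ[k] R := ∑ c, (LinearMap.mulRight k (jA (H.ltri b c))) ∘ₗ
    (LinearMap.proj r : (ι → R) →ₗ[k] R) ∘ₗ (H.lam c)
  have hΦ : ∀ Y, ∑ c, H.lam c Y r * jA (H.ltri b c) = Φ Y := by
    intro Y
    simp [Φ, LinearMap.sum_apply]
  simp only [hΦ]
  exact H.map_sw Φ a _

end helpers
end FinHopfSC

open FinHopfSC in
/-- in the Drinfeld double `D(A)` of a finite-dimensional Hopf
algebra `A`, the square of the antipode `S_{D(A)}` (which is determined by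
`S_{D(A)}(x ⊗ a) = S(a) S⁻¹(x)`) is conjugation by `d₀ = ∑ t, S²(a_t) x_t`:
`S²_{D(A)}(u) = d₀ u d₀⁻¹` for every `u ∈ D(A)`. -/
theorem stmt5 (k : Type*) [Field k] (ι : Type*) [Fintype ι] [DecidableEq ι]
    (H : FinHopfSC k ι)
    (D : Type*) [Ring D] [Algebra k D] (jX jA : (ι → k) →ₗ[k] D)
    (hA : ∀ a b, jA (H.mulA a b) = jA a * jA b) (hA1 : jA H.oneA = 1)
    (hX : ∀ x y, jX (H.mulX x y) = jX x * jX y) (hX1 : jX H.oneX = 1)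
    (hbij : Function.Bijective
      (fun c : ι → ι → k => ∑ p, ∑ q, c p q • (jX (e p) * jA (e q))))
    (hcross : ∀ q r, jA (e q) * jX (e r) =
      ∑ a, ∑ b, ∑ c, ∑ d, (H.comul q a b * H.mul c d r) •
        (jX (H.rtri a d) * jA (H.ltri b c)))
    (SD : D →ₗ[k] D)
    (hSD : ∀ p q, SD (jX (e p) * jA (e q)) = jA (H.SA (e q)) * jX (H.SXinv (e p)))
    (hinv : (∑ t, jA (H.SA (H.SA (e t))) * jX (e t)) *
        (∑ t, jA (H.SAinv (e t)) * jX (e t)) = 1 ∧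
      (∑ t, jA (H.SAinv (e t)) * jX (e t)) *
        (∑ t, jA (H.SA (H.SA (e t))) * jX (e t)) = 1) :
    ∀ u : D, SD (SD u) =
      (∑ t, jA (H.SA (H.SA (e t))) * jX (e t)) * u * (∑ t, jA (H.SAinv (e t)) * jX (e t)) := by
  set α : ι → D := fun i => jA (e i) with hα
  set ξ : ι → D := fun i => jX (e i) with hξ
  have eSA : ∀ q, jA (H.SA (e q)) = ap H.S α q := by
    intro q
    rw [map_basis jA]
    simp [SA, e, ap, hα]
  have eSA2 : ∀ q, jA (H.SA (H.SA (e q))) = ap H.S (ap H.S α) q := by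
    intro q
    rw [map_basis jA]
    simp only [SA, e, ap, hα, ite_mul, _root_.one_mul, zero_mul, Finset.sum_ite_eq,
      Finset.mem_univ, if_true, Finset.smul_sum, Finset.sum_smul, smul_smul]
    rw [Finset.sum_comm]
  have eSAi : ∀ q, jA (H.SAinv (e q)) = ap H.Sinv α q := by
    intro q
    rw [map_basis jA]
    simp [SAinv, e, ap, hα]
  have eSX : ∀ q, jX (H.SXinv (e q)) = H.tau ξ q := by
    intro q
    rw [map_basis jX]
    simp [SXinv, e, tau, hξ]
  have repA : H.IsRep α := by
    constructor
    · intro a b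
      simp only [hα]
      rw [← hA, map_basis jA]
      simp [mulA, e, mm]
    · rw [← hA1, map_basis jA]
      rfl
  have repX : H.dual.IsRep (fun i => MulOpposite.op (ξ i)) := by
    constructor
    · intro a b
      rw [← MulOpposite.op_mul]
      simp only [hξ]
      rw [← hX, map_basis jX]
      simp [mulX, e, mm, dual]
    · rw [← MulOpposite.op_one, ← hX1, map_basis jX]
      simp [on, oneX, dual, hξ]
  have hE := H.exch_of_cross (H.cross_form jX jA hcross)
  have hE' : ∀ q r, H.sw q (fun s t => α s * ∑ u, H.mul t u r • ξ u) =
      H.sw q (fun s t => (∑ u, H.mul u s r • ξ u) * α t) := by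
    intro q r
    have := congrFun (hE q) r
    simp only [sw_fun] at this
    simpa only [lam, rho, LinearMap.coe_mk, AddHom.coe_mk, Finset.mul_sum, Finset.sum_mul,
      mul_smul_comm, smul_mul_assoc] using this
  have conjA := repA.conj ξ hE'
  have conjX := repX.conj (fun i => MulOpposite.op (α i)) (by
    intro q r
    apply MulOpposite.unop_injective
    have := hE' r q
    simp only [sw, dual, Finset.unop_sum, MulOpposite.unop_smul, MulOpposite.unop_mul,
      MulOpposite.unop_op, Finset.mul_sum, Finset.sum_mul, mul_smul_comm, smul_mul_assoc,
      Finset.smul_sum, smul_smul] at this ⊢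
    simp only [← Fintype.sum_prod_type'] at this ⊢
    refine Eq.trans ?_ (Eq.trans this ?_)
    · refine Fintype.sum_equiv
        { toFun := fun x => (x.2.2, x.2.1, x.1)
          invFun := fun x => (x.2.2, x.2.1, x.1)
          left_inv := fun x => rfl
          right_inv := fun x => rfl } _ _ ?_
      rintro ⟨s, t, u⟩
      simp only [Equiv.coe_fn_mk, mul_comm]
    · refine Fintype.sum_equiv
        { toFun := fun x => (x.1, x.2.2, x.2.1)
          invFun := fun x => (x.1, x.2.2, x.2.1)
          left_inv := fun x => rfl
          right_inv := fun x => rfl } _ _ ?_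
      rintro ⟨s, t, u⟩
      simp only [Equiv.coe_fn_mk, mul_comm])
  simp only [eSA2, eSAi] at hinv ⊢
  set v : D := ∑ t, ap H.Sinv α t * ξ t with hv
  set d : D := ∑ t, ap H.S (ap H.S α) t * jX (e t) with hd
  -- conjugation formulas
  have cA : ∀ q, d * α q * v = ap H.S (ap H.S α) q := by
    intro q
    have h1 : v * ap H.S (ap H.S α) q = α q * v := by
      rw [mul_ap]
      simp only [mul_ap, conjA]
      simp only [← ap_mul]
      have : ap H.S (ap H.S (ap H.Sinv (ap H.Sinv α))) = α := by
        rw [H.ap_S_Sinv, H.ap_S_Sinv]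
      exact congrArg (· * v) (congrFun this q)
    rw [mul_assoc, ← h1, ← mul_assoc, hinv.1, _root_.one_mul]
  have cX : ∀ q, d * ξ q * v = H.tau (H.tau ξ) q := by
    intro q
    have h1 : v * H.tau (H.tau ξ) q = ξ q * v := by
      have := congrArg MulOpposite.unop (conjX q)
      have hvop : MulOpposite.unop (∑ r, ap H.dual.Sinv (fun i => MulOpposite.op (ξ i)) r
          * MulOpposite.op (α r)) = v := by
        simp only [hv, ap, dual, Finset.unop_sum, MulOpposite.unop_smul, MulOpposite.unop_mul,
          MulOpposite.unop_op, Finset.mul_sum, Finset.sum_mul, mul_smul_comm, smul_mul_assoc]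
        rw [Finset.sum_comm]
      rw [MulOpposite.unop_mul, MulOpposite.unop_mul, hvop, MulOpposite.unop_op] at this
      rw [this]
      congr 1
      simp [ap, dual, tau]
    rw [mul_assoc, ← h1, ← mul_assoc, hinv.1, _root_.one_mul]
  -- the antipode is antimultiplicative
  have hSD' : ∀ p q, SD (ξ p * α q) = ap H.S α q * H.tau ξ p := by
    intro p q
    rw [← eSA, ← eSX]
    exact hSD p q
  have anti : (fun q r => SD (α q * ξ r)) = fun q r => H.tau ξ r * ap H.S α q := by
    apply H.exch_inj
    intro q
    rw [H.star hE]
    have := congrArg (SD.compLeft ι) (hE q)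
    simp only [map_sw] at this
    have c1 : ∀ s t, (SD.compLeft ι) (H.lam t (fun r => α s * ξ r)) =
        H.lam t (fun r => SD (α s * ξ r)) := fun s t => (H.lam_map SD t _).symm
    have c2 : ∀ s t, (SD.compLeft ι) (H.rho s (fun r => ξ r * α t)) =
        H.rho s (fun r => SD (ξ r * α t)) := fun s t => (H.rho_map SD s _).symm
    simp only [hSD'] at c2
    rw [← show _ = _ from funext fun s => funext fun t => c1 s t,
      ← show _ = _ from funext fun s => funext fun t => c2 s t]
    exact this
  have anti2 : ∀ q r, SD (ap H.S α q * H.tau ξ r) =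
      H.tau (H.tau ξ) r * ap H.S (ap H.S α) q := by
    intro q r
    have a1 : ∀ q r, SD (α q * ξ r) = H.tau ξ r * ap H.S α q := fun q r =>
      congrFun (congrFun anti q) r
    have t1 : ∀ (Y : ι → D) r, H.tau Y r = ∑ y, H.Sinv y r • Y y := fun _ _ => rfl
    rw [t1 ξ, t1 (H.tau ξ)]
    simp only [ap.eq_1 H.S α q, ap.eq_1 H.S (ap H.S α) q, Finset.sum_mul, Finset.mul_sum, map_sum,
      smul_mul_assoc, mul_smul_comm, map_smul, a1, Finset.smul_sum]
    rw [Finset.sum_comm]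
    simp only [smul_comm (H.S _ _)]
  intro u
  obtain ⟨c, rfl⟩ := hbij.2 u
  simp only [map_sum, map_smul, Finset.mul_sum, Finset.sum_mul, mul_smul_comm, smul_mul_assoc]
  refine Finset.sum_congr rfl fun p _ => Finset.sum_congr rfl fun q _ => ?_
  congr 1
  have b1 : SD (jX (e p) * jA (e q)) = ap H.S α q * H.tau ξ p := hSD' p q
  rw [b1, anti2, ← cA, ← cX]
  have b2 : d * ξ p * v * (d * α q * v) = d * ξ p * (v * d) * α q * v := by
    simp only [mul_assoc]
  rw [b2, hinv.2, _root_.mul_one]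
  simp only [mul_assoc, hα, hξ]
end

section
/- Let A be a finite-dimensional Hopf algebra with basis {a_t} and dual basis {x_t} of A*. Define the left action of D(A) on A* by (x ⊗ a)·y = x₍₂₎(a ⇀ y)S⁻¹(x₍₁₎). Then for all x, y ∈ A*, Σ_t (x_t · y)(a_t · x) = x·y in A*, i.e., the R-matrix R = Σ_t a_t ⊗ x_t ∈ D(A) ⊗ D(A) satisfies m^op ∘ R = m on A* ⊗ A*. -/
namespace FinHopfSC

/-- The carrier of the Hopf algebra given by structure constants. -/
def Car {k : Type*} [Field k] {ι : Type*} [Fintype ι] [DecidableEq ι]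
    (_H : FinHopfSC k ι) : Type _ := ι → k

section
variable {k : Type*} [Field k] {ι : Type*} [Fintype ι] [DecidableEq ι]
variable (H : FinHopfSC k ι)
open scoped TensorProduct

instance : AddCommGroup (Car H) := inferInstanceAs (AddCommGroup (ι → k))
instance : Module k (Car H) := inferInstanceAs (Module k (ι → k))

/-- The standard basis. -/
noncomputable def bs : Module.Basis ι k (Car H) := Pi.basisFun k ι

/-- A coefficient vector. -/
noncomputable def vec (v : ι → k) : Car H := ∑ i, v i • bs H i

theorem vec_inj {v w : ι → k} (h : vec H v = vec H w) : v = w := by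
  funext i
  have := congrArg (fun z => (bs H).repr z i) h
  simpa [vec, Finsupp.single_apply] using this

theorem vec_delta (i : ι) : vec H (fun r => if i = r then 1 else 0) = bs H i := by
  simp [vec]

theorem vec_smul (c : k) (v : ι → k) : c • vec H v = vec H (fun r => c * v r) := by
  simp [vec, Finset.smul_sum, smul_smul]

theorem vec_sum {κ : Type*} [Fintype κ] (v : κ → ι → k) :
    ∑ j, vec H (v j) = vec H (fun r => ∑ j, v j r) := by
  simp only [vec, Finset.sum_smul]
  exact Finset.sum_comm

/-- Multiplication as a bilinear map. -/
noncomputable def mulL : Car H →ₗ[k] Car H →ₗ[k] Car H :=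
  (bs H).constr k fun s => (bs H).constr k fun t => vec H (H.mul s t)

theorem mulL_bs (s t : ι) : mulL H (bs H s) (bs H t) = vec H (H.mul s t) := by
  simp [mulL]

theorem mulL_vec_left (v : ι → k) (t : ι) :
    mulL H (vec H v) (bs H t) = vec H (fun r => ∑ s, v s * H.mul s t r) := by
  conv_lhs => rw [vec]
  simp [mulL_bs, vec_smul, vec_sum]

theorem mulL_vec_right (v : ι → k) (t : ι) :
    mulL H (bs H t) (vec H v) = vec H (fun r => ∑ s, v s * H.mul t s r) := by
  conv_lhs => rw [vec]
  simp [mulL_bs, vec_smul, vec_sum]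

theorem mulL_one_left (x : Car H) : mulL H (vec H H.one) x = x := by
  have : mulL H (vec H H.one) = LinearMap.id := by
    refine (bs H).ext fun b => ?_
    simp [mulL_vec_left, H.one_mul, vec_delta]
  rw [this]; rfl

theorem mulL_one_right (x : Car H) : mulL H x (vec H H.one) = x := by
  have : (mulL H).flip (vec H H.one) = LinearMap.id := by
    refine (bs H).ext fun b => ?_
    simp [mulL_vec_right, H.mul_one, vec_delta]
  exact congrArg (fun f => f x) this

theorem mulL_assoc (x y z : Car H) :
    mulL H (mulL H x y) z = mulL H x (mulL H y z) := by
  have h3 : ∀ a b c, mulL H (mulL H (bs H a) (bs H b)) (bs H c) =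
      mulL H (bs H a) (mulL H (bs H b) (bs H c)) := by
    intro a b c
    simp [mulL_bs, mulL_vec_left, mulL_vec_right, H.assoc]
  have h2 : ∀ a b, mulL H (mulL H (bs H a) (bs H b)) =
      mulL H (bs H a) ∘ₗ (mulL H (bs H b)) := fun a b => (bs H).ext fun c => h3 a b c
  rw [← (bs H).sum_repr x, ← (bs H).sum_repr y]
  simp only [map_sum, map_smul, LinearMap.sum_apply, LinearMap.smul_apply, h2,
    LinearMap.comp_apply]

noncomputable instance : Ring (Car H) :=
  { (inferInstance : AddCommGroup (Car H)) with
    mul := fun x y => mulL H x y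
    one := vec H H.one
    left_distrib := fun x y z => map_add _ _ _
    right_distrib := fun x y z => LinearMap.map_add₂ _ _ _ _
    zero_mul := fun x => LinearMap.map_zero₂ _ _
    mul_zero := fun x => map_zero _
    mul_assoc := mulL_assoc H
    one_mul := mulL_one_left H
    mul_one := mulL_one_right H }

theorem mul_def' (x y : Car H) : x * y = mulL H x y := rfl
theorem one_def' : (1 : Car H) = vec H H.one := rfl

noncomputable instance : Algebra k (Car H) :=
  Algebra.ofModule (fun r x y => by simp [mul_def']) (fun r x y => by simp [mul_def'])

theorem bs_mul (s t : ι) : bs H s * bs H t = vec H (H.mul s t) := mulL_bs H s t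

/-- Comultiplication. -/
noncomputable def comulL : Car H →ₗ[k] Car H ⊗[k] Car H :=
  (bs H).constr k fun r => ∑ s, ∑ t, H.comul r s t • (bs H s ⊗ₜ[k] bs H t)

/-- Counit. -/
noncomputable def counitL : Car H →ₗ[k] k := (bs H).constr k H.counit

/-- Antipode. -/
noncomputable def SL : Car H →ₗ[k] Car H := (bs H).constr k fun r => vec H (H.S r)

/-- Inverse antipode. -/
noncomputable def SinvL : Car H →ₗ[k] Car H := (bs H).constr k fun r => vec H (H.Sinv r)

theorem comulL_bs (r : ι) :
    comulL H (bs H r) = ∑ s, ∑ t, H.comul r s t • (bs H s ⊗ₜ[k] bs H t) := by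
  simp [comulL]
theorem counitL_bs (r : ι) : counitL H (bs H r) = H.counit r := by
  simp [counitL]
theorem SL_bs (r : ι) : SL H (bs H r) = vec H (H.S r) := by
  simp [SL]
theorem SinvL_bs (r : ι) : SinvL H (bs H r) = vec H (H.Sinv r) := by
  simp [SinvL]

theorem SL_SinvL (x : Car H) : SL H (SinvL H x) = x := by
  have : SL H ∘ₗ SinvL H = LinearMap.id := by
    refine (bs H).ext fun b => ?_
    rw [LinearMap.comp_apply, SinvL_bs, vec]
    simp [SL_bs, vec_smul, vec_sum, H.Sinv_S, vec_delta]
  exact congrArg (fun f => f x) this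

theorem SinvL_SL (x : Car H) : SinvL H (SL H x) = x := by
  have : SinvL H ∘ₗ SL H = LinearMap.id := by
    refine (bs H).ext fun b => ?_
    rw [LinearMap.comp_apply, SL_bs, vec]
    simp [SinvL_bs, vec_smul, vec_sum, H.S_Sinv, vec_delta]
  exact congrArg (fun f => f x) this

theorem coassoc_aux (r : ι) :
    TensorProduct.assoc k (Car H) (Car H) (Car H)
      ((comulL H).rTensor (Car H) (comulL H (bs H r))) =
    (comulL H).lTensor (Car H) (comulL H (bs H r)) := by
  simp only [comulL_bs, map_sum, map_smul, LinearMap.rTensor_tmul, LinearMap.lTensor_tmul,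
    TensorProduct.sum_tmul, TensorProduct.tmul_sum, ← TensorProduct.smul_tmul',
    TensorProduct.tmul_smul, TensorProduct.assoc_tmul, Finset.smul_sum, smul_smul]
  have e1 : ∀ a b c, (∑ s, (H.comul r s c * H.comul s a b) • (bs H a ⊗ₜ[k] (bs H b ⊗ₜ[k] bs H c)))
      = ∑ s, (H.comul r a s * H.comul s b c) • (bs H a ⊗ₜ[k] (bs H b ⊗ₜ[k] bs H c)) := by
    intro a b c
    rw [← Finset.sum_smul, ← Finset.sum_smul, H.coassoc]
  calc _ = ∑ a, ∑ b, ∑ c, ∑ s, (H.comul r s c * H.comul s a b) •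
            (bs H a ⊗ₜ[k] (bs H b ⊗ₜ[k] bs H c)) := by
        simp only [← Fintype.sum_prod_type']
        exact Fintype.sum_equiv
          ⟨fun (s, c, a, b) => (a, b, c, s), fun (a, b, c, s) => (s, c, a, b), fun _ => rfl, fun _ => rfl⟩
          _ _ (fun _ => by rfl)
    _ = ∑ a, ∑ b, ∑ c, ∑ s, (H.comul r a s * H.comul s b c) •
            (bs H a ⊗ₜ[k] (bs H b ⊗ₜ[k] bs H c)) := by simp only [e1]
    _ = _ := by
        refine Finset.sum_congr rfl fun a _ => ?_
        rw [Finset.sum_comm_cycle]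

noncomputable instance : Coalgebra k (Car H) where
  comul := comulL H
  counit := counitL H
  coassoc := (bs H).ext fun r => coassoc_aux H r
  rTensor_counit_comp_comul := by
    refine (bs H).ext fun r => ?_
    simp only [LinearMap.comp_apply, comulL_bs, map_sum, map_smul, LinearMap.rTensor_tmul,
      counitL_bs]
    rw [Finset.sum_comm]
    have : ∀ t s, H.comul r s t • (H.counit s ⊗ₜ[k] bs H t) =
      (H.comul r s t * H.counit s) • ((1 : k) ⊗ₜ[k] bs H t) := by
      intro t s; rw [mul_smul, TensorProduct.smul_tmul' (H.counit s)]; simp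
    simp [this, ← Finset.sum_smul, H.counit_comul]
  lTensor_counit_comp_comul := by
    refine (bs H).ext fun r => ?_
    simp only [LinearMap.comp_apply, comulL_bs, map_sum, map_smul, LinearMap.lTensor_tmul,
      counitL_bs]
    have : ∀ t s, H.comul r s t • (bs H s ⊗ₜ[k] H.counit t) =
      (H.comul r s t * H.counit t) • (bs H s ⊗ₜ[k] (1 : k)) := by
      intro t s; rw [mul_smul, ← TensorProduct.tmul_smul (H.counit t)]; simp
    simp [this, ← Finset.sum_smul, H.comul_counit]

theorem counit_def' : (Coalgebra.counit : Car H →ₗ[k] k) = counitL H := rfl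
theorem comul_def' : (Coalgebra.comul : Car H →ₗ[k] Car H ⊗[k] Car H) = comulL H := rfl

theorem counitL_vec (v : ι → k) : counitL H (vec H v) = ∑ r, v r * H.counit r := by
  simp [vec, counitL_bs]
theorem comulL_vec (v : ι → k) : comulL H (vec H v) =
    ∑ s, ∑ t, (∑ r, v r * H.comul r s t) • (bs H s ⊗ₜ[k] bs H t) := by
  simp only [vec, comulL_bs, map_sum, map_smul, Finset.smul_sum, smul_smul, Finset.sum_smul]
  rw [Finset.sum_comm]
  exact Finset.sum_congr rfl fun a _ => Finset.sum_comm

theorem vec_tmul_vec (v w : ι → k) : vec H v ⊗ₜ[k] vec H w =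
    ∑ s, ∑ t, (v s * w t) • (bs H s ⊗ₜ[k] bs H t) := by
  simp only [vec, TensorProduct.sum_tmul, TensorProduct.tmul_sum, TensorProduct.tmul_smul,
    ← TensorProduct.smul_tmul', smul_smul, Finset.smul_sum]
  rw [Finset.sum_comm]
  simp only [mul_comm]

theorem counitL_mul (x y : Car H) : counitL H (x * y) = counitL H x * counitL H y := by
  have h : ∀ a, counitL H ∘ₗ mulL H (bs H a) = (counitL H (bs H a)) • counitL H := by
    intro a
    refine (bs H).ext fun b => ?_
    simp [mulL_bs, counitL_vec, H.counit_mul, counitL_bs]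
  have h' : (mulL H).compr₂ (counitL H) = (LinearMap.mul k k).compl₁₂ (counitL H) (counitL H) := by
    refine (bs H).ext fun a => ?_
    exact h a
  exact congrArg (fun f => f x y) h'

theorem comulL_mul_aux (a b : ι) :
    comulL H (bs H a * bs H b) = comulL H (bs H a) * comulL H (bs H b) := by
  rw [bs_mul, comulL_vec]
  simp only [H.comul_mul, comulL_bs, Finset.sum_mul_sum]
  have h : ∀ a1 b1 a2 b2, (H.comul a a1 a2 • (bs H a1 ⊗ₜ[k] bs H a2)) *
      (H.comul b b1 b2 • (bs H b1 ⊗ₜ[k] bs H b2)) =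
      ∑ s, ∑ t, (H.comul a a1 a2 * H.comul b b1 b2 * H.mul a1 b1 s * H.mul a2 b2 t) •
        (bs H s ⊗ₜ[k] bs H t) := by
    intro a1 b1 a2 b2
    rw [smul_mul_smul_comm, Algebra.TensorProduct.tmul_mul_tmul, bs_mul, bs_mul, vec_tmul_vec]
    simp only [Finset.smul_sum, smul_smul, mul_assoc]
  simp only [h, Finset.sum_smul]
  simp only [← Fintype.sum_prod_type']
  exact Fintype.sum_equiv
    ⟨fun (s, t, a1, a2, b1, b2) => (a1, b1, a2, b2, s, t), fun (a1, b1, a2, b2, s, t) => (s, t, a1, a2, b1, b2), fun _ => rfl, fun _ => rfl⟩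
    _ _ (fun _ => by rfl)

theorem comulL_mul (x y : Car H) : comulL H (x * y) = comulL H x * comulL H y := by
  have h' : (mulL H).compr₂ (comulL H) =
      (LinearMap.mul k (Car H ⊗[k] Car H)).compl₁₂ (comulL H) (comulL H) := by
    refine (bs H).ext fun a => ?_
    refine (bs H).ext fun b => ?_
    exact comulL_mul_aux H a b
  exact congrArg (fun f => f x y) h'

noncomputable instance : Bialgebra k (Car H) :=
  Bialgebra.mk' k (Car H)
    (by rw [counit_def', one_def', counitL_vec, H.counit_one])
    (fun {a b} => counitL_mul H a b)
    (by rw [comul_def', one_def', comulL_vec, Algebra.TensorProduct.one_def, one_def', vec_tmul_vec]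
        simp only [H.comul_one])
    (fun {a b} => comulL_mul H a b)

theorem vec_mul_bs (v : ι → k) (t : ι) :
    vec H v * (bs H t) = vec H (fun r => ∑ s, v s * H.mul s t r) := mulL_vec_left H v t

theorem bs_mul_vec (v : ι → k) (t : ι) :
    bs H t * (vec H v) = vec H (fun r => ∑ s, v s * H.mul t s r) := mulL_vec_right H v t

noncomputable instance : HopfAlgebra k (Car H) where
  antipode := SL H
  mul_antipode_rTensor_comul := by
    refine (bs H).ext fun r => ?_
    rw [comul_def', counit_def']
    simp only [LinearMap.comp_apply, comulL_bs, map_sum, map_smul, LinearMap.rTensor_tmul,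
      counitL_bs, SL_bs, LinearMap.mul'_apply, vec_mul_bs, vec_smul, vec_sum,
      Algebra.linearMap_apply, Algebra.algebraMap_eq_smul_one, one_def']
    congr 1; funext t
    rw [← H.antipode_left]
    simp only [Finset.mul_sum, mul_assoc]
  mul_antipode_lTensor_comul := by
    refine (bs H).ext fun r => ?_
    rw [comul_def', counit_def']
    simp only [LinearMap.comp_apply, comulL_bs, map_sum, map_smul, LinearMap.lTensor_tmul,
      counitL_bs, SL_bs, LinearMap.mul'_apply, bs_mul_vec, vec_smul, vec_sum,
      Algebra.linearMap_apply, Algebra.algebraMap_eq_smul_one, one_def']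
    congr 1; funext t
    rw [← H.antipode_right]
    simp only [Finset.mul_sum, mul_assoc]

theorem antipode_def' : (HopfAlgebra.antipode k : Car H →ₗ[k] Car H) = SL H := rfl

theorem Sinv_key_vec (r : ι) :
    ∑ a, ∑ b, H.comul r a b • (bs H b * SinvL H (bs H a)) = H.counit r • (1 : Car H) := by
  have inj : Function.Injective (SL H) := Function.LeftInverse.injective (SinvL_SL H)
  apply inj
  have hm : ∀ x y : Car H, SL H (x * y) = SL H y * SL H x :=
    fun x y => HopfAlgebra.antipode_mul_antidistrib (R := k) x y
  have h1 : SL H 1 = 1 := HopfAlgebra.antipode_one (R := k) (A := Car H)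
  simp only [map_sum, map_smul, hm, SL_SinvL, h1]
  have := HopfAlgebra.mul_antipode_lTensor_comul_apply (R := k) (bs H r)
  rw [comul_def', counit_def', antipode_def', comulL_bs, counitL_bs] at this
  simpa [Algebra.algebraMap_eq_smul_one] using this

theorem Sinv_key (r t : ι) :
    ∑ a, ∑ b, ∑ s, H.comul r a b * H.Sinv a s * H.mul b s t = H.counit r * H.one t := by
  have := Sinv_key_vec H r
  simp only [SinvL_bs, bs_mul_vec, vec_smul, vec_sum, one_def'] at this
  have := congrFun (vec_inj H this) t
  simpa only [Finset.mul_sum, mul_assoc] using this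

theorem hit_e (x : ι → k) (t u : ι) : H.hit (e t) x u = ∑ v, H.mul u t v * x v := by
  simp [hit, e]

theorem adX_e (y : ι → k) (t s : ι) : H.adX (e t) y s =
    ∑ a, ∑ b, ∑ q, ∑ m, ∑ n,
      H.mul a b t * (H.comul s b q * (H.comul q m n * y m * H.Sinv n a)) := by
  simp [adX, mulX, SXinv, e, Finset.mul_sum]

theorem main_aux (x y : ι → k) (r : ι) :
    (∑ t, ∑ s, ∑ u, H.comul r s u * H.adX (e t) y s * H.hit (e t) x u) =
      ∑ b, ∑ m, H.comul r b m * x b * y m := by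
  have h0 : ∀ t s u, H.comul r s u * H.adX (e t) y s * H.hit (e t) x u =
      ∑ v, ∑ a, ∑ b, ∑ q, ∑ m, ∑ n, H.comul r s u * x v * H.mul u t v *
        (H.mul a b t * (H.comul s b q * (H.comul q m n * y m * H.Sinv n a))) := by
    intro t s u
    rw [hit_e, Finset.mul_sum]
    refine Finset.sum_congr rfl fun v _ => ?_
    rw [adX_e]
    simp only [← Finset.mul_sum]
    ring
  simp only [h0]
  calc _
      = ∑ u, ∑ a, ∑ b, ∑ v, ∑ s, ∑ q, ∑ m, ∑ n, (H.comul r s u * H.comul s b q * H.comul q m n * H.Sinv n a * y m * x v) *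
        ∑ t, H.mul a b t * H.mul u t v := by
        simp only [Finset.mul_sum, ← Fintype.sum_prod_type']
        exact Fintype.sum_equiv
          ⟨fun (t, s, u, v, a, b, q, m, n) => (u, a, b, v, s, q, m, n, t), fun (u, a, b, v, s, q, m, n, t) => (t, s, u, v, a, b, q, m, n), fun _ => rfl, fun _ => rfl⟩
          _ _ (fun _ => by simp only [Equiv.coe_fn_mk]; ring)
    _ = ∑ u, ∑ a, ∑ b, ∑ v, ∑ s, ∑ q, ∑ m, ∑ n, (H.comul r s u * H.comul s b q * H.comul q m n * H.Sinv n a * y m * x v) *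
        ∑ t, H.mul u a t * H.mul t b v := by simp only [H.assoc]
    _ = ∑ u, ∑ a, ∑ b, ∑ v, ∑ q, ∑ m, ∑ n, ∑ t, (H.comul q m n * H.Sinv n a * y m * x v * H.mul u a t * H.mul t b v) *
        ∑ s, H.comul r s u * H.comul s b q := by
        simp only [Finset.mul_sum, ← Fintype.sum_prod_type']
        exact Fintype.sum_equiv
          ⟨fun (u, a, b, v, s, q, m, n, t) => (u, a, b, v, q, m, n, t, s), fun (u, a, b, v, q, m, n, t, s) => (u, a, b, v, s, q, m, n, t), fun _ => rfl, fun _ => rfl⟩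
          _ _ (fun _ => by simp only [Equiv.coe_fn_mk]; ring)
    _ = ∑ u, ∑ a, ∑ b, ∑ v, ∑ q, ∑ m, ∑ n, ∑ t, (H.comul q m n * H.Sinv n a * y m * x v * H.mul u a t * H.mul t b v) *
        ∑ s, H.comul r b s * H.comul s q u := by simp only [H.coassoc]
    _ = ∑ u, ∑ a, ∑ b, ∑ v, ∑ m, ∑ n, ∑ t, ∑ s, (H.comul r b s * H.Sinv n a * y m * x v * H.mul u a t * H.mul t b v) *
        ∑ q, H.comul s q u * H.comul q m n := by
        simp only [Finset.mul_sum, ← Fintype.sum_prod_type']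
        exact Fintype.sum_equiv
          ⟨fun (u, a, b, v, q, m, n, t, s) => (u, a, b, v, m, n, t, s, q), fun (u, a, b, v, m, n, t, s, q) => (u, a, b, v, q, m, n, t, s), fun _ => rfl, fun _ => rfl⟩
          _ _ (fun _ => by simp only [Equiv.coe_fn_mk]; ring)
    _ = ∑ u, ∑ a, ∑ b, ∑ v, ∑ m, ∑ n, ∑ t, ∑ s, (H.comul r b s * H.Sinv n a * y m * x v * H.mul u a t * H.mul t b v) *
        ∑ q, H.comul s m q * H.comul q n u := by simp only [H.coassoc]
    _ = ∑ b, ∑ v, ∑ m, ∑ t, ∑ s, ∑ q, (H.comul r b s * H.comul s m q * y m * x v * H.mul t b v) *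
        ∑ n, ∑ u, ∑ a, H.comul q n u * H.Sinv n a * H.mul u a t := by
        simp only [Finset.mul_sum, ← Fintype.sum_prod_type']
        exact Fintype.sum_equiv
          ⟨fun (u, a, b, v, m, n, t, s, q) => (b, v, m, t, s, q, n, u, a), fun (b, v, m, t, s, q, n, u, a) => (u, a, b, v, m, n, t, s, q), fun _ => rfl, fun _ => rfl⟩
          _ _ (fun _ => by simp only [Equiv.coe_fn_mk]; ring)
    _ = ∑ b, ∑ v, ∑ m, ∑ t, ∑ s, ∑ q, (H.comul r b s * H.comul s m q * y m * x v * H.mul t b v) *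
        (H.counit q * H.one t) := by simp only [Sinv_key]
    _ = ∑ b, ∑ v, ∑ m, ∑ t, ∑ s, (H.comul r b s * y m * x v * H.one t * H.mul t b v) *
        ∑ q, H.comul s m q * H.counit q := by
        simp only [Finset.mul_sum, ← Fintype.sum_prod_type']
        exact Fintype.sum_equiv
          ⟨fun (b, v, m, t, s, q) => (b, v, m, t, s, q), fun (b, v, m, t, s, q) => (b, v, m, t, s, q), fun _ => rfl, fun _ => rfl⟩
          _ _ (fun _ => by simp only [Equiv.coe_fn_mk]; ring)
    _ = ∑ b, ∑ v, ∑ m, (H.comul r b m * y m * x v) * ∑ t, H.one t * H.mul t b v := by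
        simp only [H.comul_counit, mul_ite, _root_.mul_one, mul_zero, Finset.sum_ite_eq',
          Finset.mem_univ, if_true, Finset.mul_sum, mul_assoc]
    _ = _ := by
        simp only [H.one_mul, mul_ite, _root_.mul_one, mul_zero]
        refine Finset.sum_congr rfl fun b _ => ?_
        rw [Finset.sum_comm]
        simp only [Finset.sum_ite_eq, Finset.mem_univ, if_true]
        exact Finset.sum_congr rfl fun m _ => by ring

end

end FinHopfSC

open FinHopfSC in
/-- for the left action of the Drinfeld double `D(A)` on `A*`
(by `(x ⊗ a) · y = x₍₂₎ (a ⇀ y) S⁻¹(x₍₁₎)`), the `R`-matrix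
`R = ∑ t, a_t ⊗ x_t` satisfies `m ∘ᵒᵖ R = m` on `A* ⊗ A*`:
`∑ t, (ad_{x_t} y) (a_t ⇀ x) = x y` for all `x y ∈ A*`. -/
theorem stmt7 (k : Type*) [Field k] (ι : Type*) [Fintype ι] [DecidableEq ι]
    (H : FinHopfSC k ι) (x y : ι → k) :
    (∑ t, H.mulX (H.adX (e t) y) (H.hit (e t) x)) = H.mulX x y := by
  funext r
  rw [Finset.sum_apply]
  exact main_aux H x y r
end
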